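/- Let −1 < β < 0 and ν > −1/2. Then sup_{x > 0} { ( e^{−βx} K_{ν+2}(x) / x^{ν−1} ) · ∫_0^x e^{βt} t^ν I_ν(t) dt } ≥ max{ 1/(2(1+β)) , 2(ν+1)/(2ν+1) }. -/

import Mathlib

open Real MeasureTheory

/-- Modified Bessel function of the first kind, `I_ν(x) = ∑_{k} (x/2)^{ν+2k} / (Γ(ν+k+1) k!)`. -/
noncomputable def besselI (ν x : ℝ) : ℝ :=
  ∑' k : ℕ, (x / 2) ^ (ν + 2 * (k : ℝ)) / (Real.Gamma (ν + (k : ℝ) + 1) * (Nat.factorial k : ℝ))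

/-- Modified Bessel function of the second kind, `K_ν(x) = ∫_0^∞ e^{-x cosh t} cosh(ν t) dt`. -/
noncomputable def besselK (ν x : ℝ) : ℝ :=
  ∫ t in Set.Ioi (0 : ℝ), Real.exp (-x * Real.cosh t) * Real.cosh (ν * t)

/-- Lower incomplete gamma function `γ(a, x) = ∫_0^x t^{a-1} e^{-t} dt`. -/
noncomputable def lowerIncGamma (a x : ℝ) : ℝ :=
  ∫ t in (0 : ℝ)..x, t ^ (a - 1) * Real.exp (-t)

/-!
The supremum dominates the limits of the function at the two ends of `(0, ∞)`: it is finite because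
the function is continuous with finite limits, `2(ν+1)/(2ν+1)` at `0` and `1/(2(1+β))` at `∞`.

Both limits come from the leading behaviour of the Bessel functions. The substitutions
`r = cosh t - 1` in the integral for `K_μ` and `s = 1 - r` in Poisson's integral
`I_ν(x) = (x/2)^ν / (√π Γ(ν + 1/2)) ∫_{-1}^1 (1 - s²)^{ν - 1/2} e^{xs} ds` turn `e^x K_μ(x)` and,
up to a power of `x`, `e^{-x} I_ν(x)` into Laplace transforms, whose growth at `0` or `∞` is read
off by Watson's lemma from the growth of the transformed function at the opposite end. L'Hôpital's
rule then passes from the integrand `e^{βt} t^ν I_ν(t)` to its integral.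
-/

open Filter Set Topology

section Asymptotics

variable {f f' g g' : ℝ → ℝ} {a b c p : ℝ}

lemma eventually_lt_div_of_tendsto_deriv_div_atTop (hf : ∀ᶠ x in atTop, HasDerivAt f (f' x) x)
    (hg : ∀ᶠ x in atTop, HasDerivAt g (g' x) x) (hg' : ∀ᶠ x in atTop, 0 < g' x)
    (hg_top : Tendsto g atTop atTop) (h : Tendsto (fun x => f' x / g' x) atTop (𝓝 c))
    (hac : a < c) : ∀ᶠ x in atTop, a < f x / g x := by
  obtain ⟨m, ham, hmc⟩ := exists_between hac
  obtain ⟨T, hT⟩ := eventually_atTop.1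
    (hf.and (hg.and (hg'.and (h.eventually_const_lt hmc))))
  have hderiv (x : ℝ) (hx : T ≤ x) : HasDerivAt (fun y => f y - m * g y) (f' x - m * g' x) x :=
    (hT x hx).1.sub ((hT x hx).2.1.const_mul m)
  have hmono : MonotoneOn (fun y => f y - m * g y) (Ici T) := by
    refine monotoneOn_of_hasDerivWithinAt_nonneg (convex_Ici T)
      (fun x hx => (hderiv x hx).continuousAt.continuousWithinAt)
      (fun x hx => (hderiv x (interior_subset hx)).hasDerivWithinAt) fun x hx => ?_
    obtain ⟨-, -, hpos, hlt⟩ := hT x (interior_subset hx)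
    exact sub_nonneg.2 ((lt_div_iff₀ hpos).1 hlt).le
  have hlarge : ∀ᶠ x in atTop, m * g T - f T < (m - a) * g x :=
    (hg_top.const_mul_atTop (sub_pos.2 ham)).eventually_gt_atTop _
  filter_upwards [hlarge, hg_top.eventually_gt_atTop 0, eventually_ge_atTop T] with x hx hgx hTx
  have hTx' : f T - m * g T ≤ f x - m * g x := hmono self_mem_Ici hTx hTx
  rw [lt_div_iff₀ hgx]
  linarith

lemma tendsto_div_of_tendsto_deriv_div_atTop (hf : ∀ᶠ x in atTop, HasDerivAt f (f' x) x)
    (hg : ∀ᶠ x in atTop, HasDerivAt g (g' x) x) (hg' : ∀ᶠ x in atTop, 0 < g' x)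
    (hg_top : Tendsto g atTop atTop) (h : Tendsto (fun x => f' x / g' x) atTop (𝓝 c)) :
    Tendsto (fun x => f x / g x) atTop (𝓝 c) := by
  refine tendsto_order.2 ⟨fun a ha =>
    eventually_lt_div_of_tendsto_deriv_div_atTop hf hg hg' hg_top h ha, fun a ha => ?_⟩
  have hneg : Tendsto (fun x => -f' x / g' x) atTop (𝓝 (-c)) := by
    simpa only [neg_div] using h.neg
  filter_upwards [eventually_lt_div_of_tendsto_deriv_div_atTop (hf.mono fun x hx => hx.fun_neg)
    hg hg' hg_top hneg (neg_lt_neg ha)] with x hx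
  rw [neg_div] at hx
  exact neg_lt_neg_iff.1 hx

lemma hasDerivAt_integral_of_continuousOn_Ioi (hf : ContinuousOn f (Ioi a))
    (hint : ∀ x > a, IntervalIntegrable f volume a x) {x : ℝ} (hx : a < x) :
    HasDerivAt (fun y => ∫ t in a..y, f t) (f x) x :=
  intervalIntegral.integral_hasDerivAt_right (hint x hx)
    (hf.stronglyMeasurableAtFilter isOpen_Ioi x hx) (hf.continuousAt (Ioi_mem_nhds hx))

lemma tendsto_integral_nhdsGT (hint : ∀ x > a, IntervalIntegrable f volume a x) :
    Tendsto (fun x => ∫ t in a..x, f t) (𝓝[>] a) (𝓝 0) := by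
  have hlt : a < a + 1 := lt_add_one a
  have h := (intervalIntegral.continuousOn_primitive_interval' (hint (a + 1) hlt) left_mem_uIcc
    a left_mem_uIcc).tendsto
  rw [intervalIntegral.integral_same] at h
  exact h.mono_left ((nhdsWithin_Ioo_eq_nhdsGT hlt).symm.le.trans
    (nhdsWithin_mono a (Ioo_subset_Icc_self.trans Icc_subset_uIcc)))

lemma tendsto_rpow_nhdsGT_zero (hp : 0 < p) : Tendsto (fun x : ℝ => x ^ p) (𝓝[>] 0) (𝓝 0) := by
  simpa only [zero_rpow hp.ne'] using
    (continuousAt_rpow_const 0 p (Or.inr hp.le)).tendsto.mono_left nhdsWithin_le_nhds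

lemma tendsto_integral_div_rpow_nhdsGT_zero (hf : ContinuousOn f (Ioi 0))
    (hint : ∀ x > 0, IntervalIntegrable f volume 0 x) (hp : 0 < p)
    (h : Tendsto (fun t => f t / t ^ (p - 1)) (𝓝[>] 0) (𝓝 c)) :
    Tendsto (fun x => (∫ t in (0 : ℝ)..x, f t) / x ^ p) (𝓝[>] 0) (𝓝 (c / p)) := by
  refine HasDerivAt.lhopital_zero_nhdsGT (f' := f) (g' := fun x => p * x ^ (p - 1)) ?_ ?_ ?_
    (tendsto_integral_nhdsGT hint) (tendsto_rpow_nhdsGT_zero hp) ?_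
  · filter_upwards [self_mem_nhdsWithin] with x hx
    exact hasDerivAt_integral_of_continuousOn_Ioi hf hint hx
  · filter_upwards [self_mem_nhdsWithin] with x hx
    exact hasDerivAt_rpow_const (Or.inl (ne_of_gt hx))
  · filter_upwards [self_mem_nhdsWithin] with x hx
    exact (mul_pos hp (rpow_pos_of_pos hx _)).ne'
  · refine (h.div_const p).congr fun x => ?_
    rw [div_div, mul_comm]

lemma tendsto_integral_div_exp_mul_rpow_atTop (hf : ContinuousOn f (Ioi 0))
    (hint : ∀ x > 0, IntervalIntegrable f volume 0 x) (hb : 0 < b)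
    (h : Tendsto (fun t => f t / (exp (b * t) * t ^ p)) atTop (𝓝 c)) :
    Tendsto (fun x => (∫ t in (0 : ℝ)..x, f t) / (exp (b * x) * x ^ p)) atTop (𝓝 (c / b)) := by
  have hlog : Tendsto (fun x : ℝ => b + p / x) atTop (𝓝 b) := by
    simpa only [add_zero, id] using (tendsto_const_nhds (x := b)).add
      ((tendsto_const_nhds (x := p)).div_atTop tendsto_id)
  refine tendsto_div_of_tendsto_deriv_div_atTop (f' := f)
    (g' := fun x => exp (b * x) * x ^ p * (b + p / x)) ?_ ?_ ?_ ?_ ?_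
  · filter_upwards [eventually_gt_atTop 0] with x hx
    exact hasDerivAt_integral_of_continuousOn_Ioi hf hint hx
  · filter_upwards [eventually_gt_atTop 0] with x hx
    convert! ((hasDerivAt_id x).const_mul b).exp.mul
      (hasDerivAt_rpow_const (p := p) (Or.inl hx.ne')) using 1
    rw [rpow_sub_one hx.ne', id]
    ring
  · filter_upwards [eventually_gt_atTop 0, hlog.eventually_const_lt hb] with x hx hbx
    positivity
  · refine (tendsto_exp_mul_div_rpow_atTop (-p) b hb).congr' ?_
    filter_upwards [eventually_gt_atTop 0] with x hx
    rw [rpow_neg hx.le, div_inv_eq_mul]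
  · refine (h.div hlog hb.ne').congr fun x => ?_
    simp only [Pi.div_apply, div_div]

lemma bddAbove_image_Ioi_of_tendsto {l m : ℝ} (hf : ContinuousOn f (Ioi a))
    (ha : Tendsto f (𝓝[>] a) (𝓝 l)) (htop : Tendsto f atTop (𝓝 m)) : BddAbove (f '' Ioi a) := by
  obtain ⟨u, hau, hu⟩ := mem_nhdsGT_iff_exists_Ioo_subset.1
    (ha.eventually_le_const (lt_add_one l))
  obtain ⟨v, hv⟩ := eventually_atTop.1 (htop.eventually_le_const (lt_add_one m))
  obtain ⟨B, hB⟩ := isCompact_Icc.bddAbove_image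
    (hf.mono fun x (hx : x ∈ Icc u v) => lt_of_lt_of_le hau hx.1)
  refine ⟨max (l + 1) (max B (m + 1)), ?_⟩
  rintro _ ⟨x, hx, rfl⟩
  rcases lt_or_ge x u with hxu | hux
  · exact le_max_of_le_left (hu ⟨hx, hxu⟩)
  rcases le_total x v with hxv | hvx
  · exact le_max_of_le_right (le_max_of_le_left (hB ⟨x, ⟨hux, hxv⟩, rfl⟩))
  · exact le_max_of_le_right (le_max_of_le_right (hv x hvx))

end Asymptotics

/-- The Laplace transform `∫_0^∞ e^{-xr} f(r) dr` of a function on `(0, ∞)`, the common form of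
both Bessel functions after an exponential normalisation. -/
noncomputable def laplaceTransform (f : ℝ → ℝ) (x : ℝ) : ℝ :=
  ∫ r in Ioi (0 : ℝ), exp (-x * r) * f r

section LaplaceTransform

variable {f φ : ℝ → ℝ} {l m : Filter ℝ} {S : Set ℝ} {a c C x₀ : ℝ}

lemma rpow_mul_laplaceTransform_eq {x : ℝ} (hx : 0 < x) :
    x ^ a * laplaceTransform (fun r => r ^ (a - 1) * φ r) x =
      ∫ w in Ioi (0 : ℝ), exp (-w) * w ^ (a - 1) * φ (w / x) := by
  have hscale := integral_comp_mul_left_Ioi (fun w => exp (-w) * w ^ (a - 1) * φ (w / x)) 0 hx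
  rw [mul_zero, smul_eq_mul, eq_inv_mul_iff_mul_eq₀ hx.ne'] at hscale
  rw [← hscale, laplaceTransform, ← integral_const_mul, ← integral_const_mul]
  refine setIntegral_congr_fun measurableSet_Ioi fun r (hr : 0 < r) => ?_
  have hxa : x * x ^ (a - 1) = x ^ a := by
    rw [rpow_sub_one hx.ne', mul_div_cancel₀ _ hx.ne']
  simp only [mul_rpow hx.le hr.le, mul_div_cancel_left₀ _ hx.ne', ← hxa, neg_mul]
  ring

lemma tendsto_rpow_mul_laplaceTransform_of_bounded [l.IsCountablyGenerated] (ha : 0 < a)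
    (hl : ∀ᶠ x in l, 0 < x) (hφ : Measurable φ) (hC : ∀ r > 0, |φ r| ≤ C)
    (h : ∀ w > 0, Tendsto (fun x => φ (w / x)) l (𝓝 c)) :
    Tendsto (fun x => x ^ a * laplaceTransform (fun r => r ^ (a - 1) * φ r) x) l
      (𝓝 (c * Gamma a)) := by
  rw [Gamma_eq_integral ha, mul_comm, ← integral_mul_const]
  refine (tendsto_integral_filter_of_dominated_convergence
    (F := fun x w => exp (-w) * w ^ (a - 1) * φ (w / x))
    (fun w => exp (-w) * w ^ (a - 1) * C) ?_ ?_ ((GammaIntegral_convergent ha).mul_const C)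
    ?_).congr' ?_
  · exact .of_forall fun x => (by fun_prop : Measurable _).aestronglyMeasurable
  · filter_upwards [hl] with x hx
    filter_upwards [ae_restrict_mem measurableSet_Ioi] with w (hw : 0 < w)
    rw [norm_mul, norm_of_nonneg (by positivity), norm_eq_abs]
    gcongr
    exact hC _ (div_pos hw hx)
  · filter_upwards [ae_restrict_mem measurableSet_Ioi] with w hw
    exact (h w hw).const_mul _
  · filter_upwards [hl] with x hx
    exact (rpow_mul_laplaceTransform_eq hx).symm

lemma integrableOn_exp_mul_rpow_mul_of_bounded {x : ℝ} (ha : 0 < a) (hx : 0 < x)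
    (hφ : Measurable φ) (hC : ∀ r > 0, |φ r| ≤ C) :
    IntegrableOn (fun r => exp (-x * r) * (r ^ (a - 1) * φ r)) (Ioi 0) := by
  have hGamma : IntegrableOn (fun r : ℝ => r ^ (a - 1) * exp (-x * r)) (Ioi 0) := by
    simpa only [rpow_one] using integrableOn_rpow_mul_exp_neg_mul_rpow (p := 1) (s := a - 1)
      (by linarith) one_pos hx
  refine (hGamma.mul_const C).mono' (by fun_prop) ?_
  filter_upwards [ae_restrict_mem measurableSet_Ioi] with r (hr : 0 < r)
  rw [mul_left_comm, ← mul_assoc, norm_mul, norm_of_nonneg (by positivity), norm_eq_abs]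
  gcongr
  exact hC r hr

lemma ae_norm_exp_mul_indicator_le {x e : ℝ} (he : ∀ r > 0, r ∈ S → (x₀ - x) * r ≤ e) :
    ∀ᵐ r ∂volume.restrict (Ioi (0 : ℝ)),
      ‖exp (-x * r) * S.indicator f r‖ ≤ exp e * ‖exp (-x₀ * r) * f r‖ := by
  filter_upwards [ae_restrict_mem measurableSet_Ioi] with r hr
  by_cases hrS : r ∈ S
  · simp only [indicator_of_mem hrS, norm_mul, norm_of_nonneg (exp_pos _).le, ← mul_assoc,
      ← exp_add]
    gcongr
    linarith [he r hr hrS]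
  · simp only [indicator_of_notMem hrS, mul_zero, norm_zero]
    positivity

lemma integrableOn_exp_mul_indicator {x e : ℝ} (hf : Measurable f) (hS : MeasurableSet S)
    (he : ∀ r > 0, r ∈ S → (x₀ - x) * r ≤ e)
    (hint : IntegrableOn (fun r => exp (-x₀ * r) * f r) (Ioi 0)) :
    IntegrableOn (fun r => exp (-x * r) * S.indicator f r) (Ioi 0) :=
  (hint.norm.const_mul (exp e)).mono'
    ((by fun_prop : Measurable fun r => exp (-x * r)).mul
      (hf.indicator hS)).aestronglyMeasurable (ae_norm_exp_mul_indicator_le he)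

lemma tendsto_rpow_mul_laplaceTransform_indicator (hl : ∀ᶠ x in l, 0 < x) {η : ℝ → ℝ}
    (hη : Tendsto (fun x => x ^ a * exp (η x)) l (𝓝 0))
    (hηS : ∀ᶠ x in l, ∀ r > 0, r ∈ S → (x₀ - x) * r ≤ η x)
    (hint : IntegrableOn (fun r => exp (-x₀ * r) * f r) (Ioi 0)) :
    Tendsto (fun x => x ^ a * laplaceTransform (S.indicator f) x) l (𝓝 0) := by
  have hbound := hη.mul_const (∫ r in Ioi (0 : ℝ), ‖exp (-x₀ * r) * f r‖)
  rw [zero_mul] at hbound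
  refine squeeze_zero_norm' ?_ hbound
  filter_upwards [hl, hηS] with x hx hxS
  rw [norm_mul, norm_of_nonneg (rpow_nonneg hx.le a), mul_assoc, ← integral_const_mul]
  gcongr
  exact norm_integral_le_of_norm_le (hint.norm.const_mul _) (ae_norm_exp_mul_indicator_le hxS)

-- Where `f r / r ^ (a - 1)` is bounded, the substitution `r = w / x` allows dominated convergence;
-- the rest of the integral is negligible by `hdecay`.
lemma tendsto_rpow_mul_laplaceTransform [l.IsCountablyGenerated] (ha : 0 < a)
    (hl : ∀ᶠ x in l, 0 < x) (hlm : ∀ w > 0, Tendsto (fun x => w / x) l m)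
    (hdecay : ∀ S ∈ m, ∃ η : ℝ → ℝ, Tendsto (fun x => x ^ a * exp (η x)) l (𝓝 0) ∧
      ∀ᶠ x in l, ∀ r > 0, r ∉ S → (x₀ - x) * r ≤ η x)
    (hf : Measurable f) (hint : IntegrableOn (fun r => exp (-x₀ * r) * f r) (Ioi 0))
    (h : Tendsto (fun r => f r / r ^ (a - 1)) m (𝓝 c)) :
    Tendsto (fun x => x ^ a * laplaceTransform f x) l (𝓝 (c * Gamma a)) := by
  set φ := fun r => f r / r ^ (a - 1)
  have hφ : Measurable φ := by fun_prop
  set S := {r | |φ r| < |c| + 1}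
  have hS : MeasurableSet S := measurableSet_lt hφ.abs measurable_const
  have hSm : S ∈ m := h.abs.eventually_lt_const (lt_add_one |c|)
  obtain ⟨η, hη, hηS⟩ := hdecay S hSm
  have hφS : Measurable (S.indicator φ) := hφ.indicator hS
  have hbdd (r : ℝ) (_ : r > 0) : |S.indicator φ r| ≤ |c| + 1 := by
    by_cases hr : r ∈ S
    · exact (indicator_of_mem hr φ).symm ▸ le_of_lt hr
    · rw [indicator_of_notMem hr, abs_zero]
      positivity
  have hmain := tendsto_rpow_mul_laplaceTransform_of_bounded ha hl hφS hbdd fun w hw =>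
    ((h.congr' (eventually_of_mem hSm fun r hr => (indicator_of_mem hr φ).symm)).comp (hlm w hw))
  have hrem := tendsto_rpow_mul_laplaceTransform_indicator (S := Sᶜ) hl hη hηS hint
  refine (by simpa only [add_zero] using hmain.add hrem : Tendsto _ l _).congr' ?_
  filter_upwards [hl, hηS] with x hx hxS
  rw [← mul_add, laplaceTransform, laplaceTransform, laplaceTransform, ← integral_add
    (integrableOn_exp_mul_rpow_mul_of_bounded ha hx hφS hbdd)
    (integrableOn_exp_mul_indicator hf hS.compl hxS hint)]
  congr 1
  refine setIntegral_congr_fun measurableSet_Ioi fun r (hr : 0 < r) => ?_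
  have hpow : r ^ (a - 1) ≠ 0 := (rpow_pos_of_pos hr _).ne'
  by_cases hrS : r ∈ S
  · simp [φ, hrS, mul_div_cancel₀ _ hpow]
  · simp [hrS]

lemma tendsto_rpow_mul_laplaceTransform_atTop (ha : 0 < a) (hf : Measurable f)
    (hint : IntegrableOn (fun r => exp (-x₀ * r) * f r) (Ioi 0))
    (h : Tendsto (fun r => f r / r ^ (a - 1)) (𝓝[>] 0) (𝓝 c)) :
    Tendsto (fun x => x ^ a * laplaceTransform f x) atTop (𝓝 (c * Gamma a)) := by
  refine tendsto_rpow_mul_laplaceTransform ha (eventually_gt_atTop 0) (fun w hw => ?_)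
    (fun S hS => ?_) hf hint h
  · exact tendsto_nhdsWithin_iff.2 ⟨tendsto_const_nhds.div_atTop tendsto_id,
      (eventually_gt_atTop 0).mono fun x hx => div_pos hw hx⟩
  · obtain ⟨δ, hδ, hS⟩ := mem_nhdsGT_iff_exists_Ioo_subset.1 hS
    refine ⟨fun x => (x₀ - x) * δ, ?_, ?_⟩
    · have h := (tendsto_rpow_mul_exp_neg_mul_atTop_nhds_zero a δ hδ).mul_const (exp (x₀ * δ))
      rw [zero_mul] at h
      refine h.congr fun x => ?_
      rw [mul_assoc, ← exp_add]
      ring_nf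
    · filter_upwards [eventually_ge_atTop x₀] with x hx r hr hrS
      have hδr : δ ≤ r := not_lt.1 fun hlt => hrS (hS ⟨hr, hlt⟩)
      exact mul_le_mul_of_nonpos_left hδr (sub_nonpos.2 hx)

lemma tendsto_rpow_mul_laplaceTransform_nhdsGT_zero (ha : 0 < a) (hf : Measurable f)
    (hint : IntegrableOn (fun r => exp (-x₀ * r) * f r) (Ioi 0))
    (h : Tendsto (fun r => f r / r ^ (a - 1)) atTop (𝓝 c)) :
    Tendsto (fun x => x ^ a * laplaceTransform f x) (𝓝[>] 0) (𝓝 (c * Gamma a)) := by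
  refine tendsto_rpow_mul_laplaceTransform ha self_mem_nhdsWithin (fun w hw => ?_)
    (fun S hS => ?_) hf hint h
  · simpa only [div_eq_mul_inv] using tendsto_inv_nhdsGT_zero.const_mul_atTop hw
  · obtain ⟨R, hS⟩ := mem_atTop_sets.1 hS
    refine ⟨fun _ => |x₀| * |R|, ?_, ?_⟩
    · simpa only [zero_mul] using (tendsto_rpow_nhdsGT_zero ha).mul_const (exp (|x₀| * |R|))
    · filter_upwards [self_mem_nhdsWithin] with x (hx : 0 < x) r hr hrS
      have hrR : r ≤ |R| := (not_le.1 fun hle => hrS (hS r hle)).le.trans (le_abs_self R)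
      calc (x₀ - x) * r ≤ |x₀| * r := by gcongr; linarith [le_abs_self x₀]
        _ ≤ |x₀| * |R| := by gcongr

lemma continuousAt_laplaceTransform (hf : Measurable f)
    (hint : IntegrableOn (fun r => exp (-x₀ * r) * f r) (Ioi 0)) {x : ℝ} (hx : x₀ < x) :
    ContinuousAt (laplaceTransform f) x := by
  refine continuousAt_of_dominated (.of_forall fun y => (by fun_prop : Measurable
    fun r => exp (-y * r) * f r).aestronglyMeasurable) ?_ hint.norm
    (.of_forall fun r => by fun_prop)
  filter_upwards [eventually_gt_nhds hx] with y hy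
  filter_upwards [ae_restrict_mem measurableSet_Ioi] with r (hr : 0 < r)
  rw [norm_mul, norm_mul, norm_of_nonneg (exp_pos _).le, norm_of_nonneg (exp_pos _).le]
  gcongr

end LaplaceTransform

/-- The function whose Laplace transform is `e^x K_μ(x)`: substitute `r = cosh t - 1` in the
integral defining `besselK`. -/
noncomputable def besselKWeight (μ r : ℝ) : ℝ :=
  cosh (μ * arcosh (1 + r)) / sinh (arcosh (1 + r))

section BesselK

variable {μ x : ℝ}

lemma neg_mul_cosh_add_mul_le {t : ℝ} (hx : 0 < x) (ht : 0 ≤ t) :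
    -x * cosh t + μ * t ≤ (μ + 1) ^ 2 / x - t := by
  have hcosh : t ^ 2 / 4 ≤ cosh t := by
    rw [cosh_eq]
    linarith [quadratic_le_exp_of_nonneg ht, exp_pos (-t)]
  have hsq : (μ + 1) ^ 2 / x - (μ + 1) * t + x * t ^ 2 / 4 = (x * t / 2 - (μ + 1)) ^ 2 / x := by
    field_simp
    ring
  have hsq_nonneg : 0 ≤ (x * t / 2 - (μ + 1)) ^ 2 / x := by positivity
  linarith [mul_le_mul_of_nonneg_left hcosh hx.le]

lemma exp_neg_mul_cosh_mul_cosh_le {t : ℝ} (hx : 0 < x) (ht : 0 ≤ t) :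
    exp (-x * cosh t) * cosh (μ * t) ≤ exp ((|μ| + 1) ^ 2 / x) * exp (-t) := by
  have hcosh : cosh (μ * t) ≤ exp (|μ| * t) := by
    rw [← cosh_abs, abs_mul, abs_of_nonneg ht, cosh_eq]
    have : 0 ≤ |μ| * t := by positivity
    linarith [exp_le_exp.2 (neg_le_self this)]
  calc exp (-x * cosh t) * cosh (μ * t) ≤ exp (-x * cosh t) * exp (|μ| * t) := by gcongr
    _ ≤ exp ((|μ| + 1) ^ 2 / x) * exp (-t) := by
      rw [← exp_add, ← exp_add, ← sub_eq_add_neg]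
      exact exp_le_exp.2 (neg_mul_cosh_add_mul_le hx ht)

lemma integrableOn_exp_neg_mul_cosh_mul_cosh (hx : 0 < x) :
    IntegrableOn (fun t => exp (-x * cosh t) * cosh (μ * t)) (Ioi 0) := by
  refine ((integrableOn_exp_neg_Ioi 0).const_mul (exp ((|μ| + 1) ^ 2 / x))).mono' (by fun_prop) ?_
  filter_upwards [ae_restrict_mem measurableSet_Ioi] with t (ht : 0 < t)
  rw [norm_of_nonneg (by positivity)]
  exact exp_neg_mul_cosh_mul_cosh_le hx ht.le

lemma image_cosh_sub_one_Ioi : (fun t => cosh t - 1) '' Ioi 0 = Ioi 0 := by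
  ext r
  refine ⟨?_, fun hr => ⟨arcosh (1 + r), arcosh_pos (lt_add_of_pos_right 1 hr), ?_⟩⟩
  · rintro ⟨t, ht, rfl⟩
    exact sub_pos.2 (one_lt_cosh.2 (ne_of_gt ht))
  · simp only [cosh_arcosh (lt_add_of_pos_right 1 hr).le, add_sub_cancel_left]

lemma injOn_cosh_sub_one : InjOn (fun t => cosh t - 1) (Ioi 0) := fun _ hs _ ht hst =>
  cosh_injOn (mem_Ici_of_Ioi hs) (mem_Ici_of_Ioi ht) (sub_left_inj.1 hst)

lemma hasDerivWithinAt_cosh_sub_one (t : ℝ) :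
    HasDerivWithinAt (fun t => cosh t - 1) (sinh t) (Ioi 0) t :=
  ((hasDerivAt_cosh t).sub_const 1).hasDerivWithinAt

lemma abs_sinh_smul_exp_mul_besselKWeight {t : ℝ} (ht : 0 < t) :
    |sinh t| • (exp (-x * (cosh t - 1)) * besselKWeight μ (cosh t - 1)) =
      exp x * (exp (-x * cosh t) * cosh (μ * t)) := by
  have hsinh : 0 < sinh t := sinh_pos_iff.2 ht
  rw [besselKWeight, add_sub_cancel, arcosh_cosh ht.le, abs_of_pos hsinh, mul_sub, sub_eq_add_neg,
    exp_add, smul_eq_mul]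
  field_simp

lemma integrableOn_exp_mul_besselKWeight (hx : 0 < x) :
    IntegrableOn (fun r => exp (-x * r) * besselKWeight μ r) (Ioi 0) := by
  rw [← image_cosh_sub_one_Ioi, integrableOn_image_iff_integrableOn_abs_deriv_smul
    measurableSet_Ioi (fun t _ => hasDerivWithinAt_cosh_sub_one t) injOn_cosh_sub_one]
  exact IntegrableOn.congr_fun
    ((integrableOn_exp_neg_mul_cosh_mul_cosh hx).const_mul (exp x))
    (fun t ht => (abs_sinh_smul_exp_mul_besselKWeight ht).symm) measurableSet_Ioi

lemma laplaceTransform_besselKWeight :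
    laplaceTransform (besselKWeight μ) x = exp x * besselK μ x := by
  rw [laplaceTransform, ← image_cosh_sub_one_Ioi, integral_image_eq_integral_abs_deriv_smul
    measurableSet_Ioi (fun t _ => hasDerivWithinAt_cosh_sub_one t) injOn_cosh_sub_one, besselK,
    ← integral_const_mul]
  exact setIntegral_congr_fun measurableSet_Ioi fun t ht => abs_sinh_smul_exp_mul_besselKWeight ht

lemma besselK_eq_exp_mul_laplaceTransform :
    besselK μ x = exp (-x) * laplaceTransform (besselKWeight μ) x := by
  rw [laplaceTransform_besselKWeight, ← mul_assoc, ← exp_add, neg_add_cancel, exp_zero, one_mul]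

lemma measurable_besselKWeight : Measurable (besselKWeight μ) := by
  have : Measurable fun r => arcosh (1 + r) := by
    unfold arcosh
    fun_prop
  unfold besselKWeight
  fun_prop

lemma sinh_arcosh_one_add {r : ℝ} (hr : 0 < r) : sinh (arcosh (1 + r)) = √(r * (2 + r)) := by
  rw [sinh_arcosh (by linarith)]
  ring_nf

lemma tendsto_sinh_arcosh_div_atTop :
    Tendsto (fun r => sinh (arcosh (1 + r)) / r) atTop (𝓝 1) := by
  have h : Tendsto (fun r : ℝ => √(2 / r + 1)) atTop (𝓝 √(0 + 1)) :=
    ((tendsto_const_nhds.div_atTop tendsto_id).add_const 1).sqrt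
  rw [zero_add, sqrt_one] at h
  refine h.congr' ?_
  filter_upwards [eventually_gt_atTop 0] with r hr
  rw [sinh_arcosh_one_add hr, eq_div_iff hr.ne', ← sqrt_sq hr.le, ← sqrt_mul (by positivity),
    sqrt_sq hr.le]
  congr 1
  field_simp

lemma tendsto_exp_arcosh_div_atTop :
    Tendsto (fun r => exp (arcosh (1 + r)) / r) atTop (𝓝 2) := by
  have h := (tendsto_inv_atTop_zero (𝕜 := ℝ)).add_const 1 |>.add tendsto_sinh_arcosh_div_atTop
  norm_num only at h
  refine h.congr' ?_
  filter_upwards [eventually_gt_atTop 0] with r hr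
  rw [← cosh_add_sinh, cosh_arcosh (by linarith)]
  field_simp

lemma tendsto_cosh_mul_arcosh_div_rpow_atTop (hμ : 0 < μ) :
    Tendsto (fun r => cosh (μ * arcosh (1 + r)) / r ^ μ) atTop (𝓝 (2 ^ (μ - 1))) := by
  have hpos : Tendsto (fun r => (exp (arcosh (1 + r)) / r) ^ μ) atTop (𝓝 (2 ^ μ)) :=
    tendsto_exp_arcosh_div_atTop.rpow_const (Or.inl two_ne_zero)
  have hneg : Tendsto (fun r : ℝ => exp (-(μ * arcosh (1 + r))) / r ^ μ) atTop (𝓝 0) := by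
    refine squeeze_zero' ?_ ?_ (tendsto_inv_atTop_zero.comp (tendsto_rpow_atTop hμ))
    · filter_upwards [eventually_ge_atTop 0] with r hr
      positivity
    · filter_upwards [eventually_gt_atTop 0] with r hr
      have : 0 ≤ μ * arcosh (1 + r) := mul_nonneg hμ.le (arcosh_nonneg (by linarith))
      rw [Function.comp, div_eq_mul_inv]
      exact mul_le_of_le_one_left (by positivity) (exp_le_one_iff.2 (neg_nonpos.2 this))
  have h := (hpos.add hneg).div_const 2
  rw [add_zero, ← rpow_sub_one two_ne_zero] at h
  refine h.congr' ?_
  filter_upwards [eventually_gt_atTop 0] with r hr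
  rw [div_rpow (exp_pos _).le hr.le, ← exp_mul, mul_comm (arcosh _), cosh_eq]
  ring

lemma tendsto_besselKWeight_div_rpow_atTop (hμ : 0 < μ) :
    Tendsto (fun r => besselKWeight μ r / r ^ (μ - 1)) atTop (𝓝 (2 ^ (μ - 1))) := by
  have h := (tendsto_cosh_mul_arcosh_div_rpow_atTop hμ).div
    tendsto_sinh_arcosh_div_atTop one_ne_zero
  rw [div_one] at h
  refine h.congr' ?_
  filter_upwards [eventually_gt_atTop 0] with r hr
  rw [Pi.div_apply, besselKWeight, rpow_sub_one hr.ne']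
  field_simp

lemma tendsto_besselKWeight_div_rpow_nhdsGT_zero :
    Tendsto (fun r => besselKWeight μ r / r ^ ((1 / 2 : ℝ) - 1)) (𝓝[>] 0) (𝓝 (√2)⁻¹) := by
  have harcosh : Tendsto (fun r => arcosh (1 + r)) (𝓝[>] 0) (𝓝 0) := by
    have hcont : ContinuousOn (fun r => arcosh (1 + r)) (Ici 0) :=
      continuousOn_arcosh.comp (by fun_prop) fun r hr => mem_Ici.2 (le_add_of_nonneg_right hr)
    simpa only [add_zero, arcosh_zero] using
      (hcont 0 self_mem_Ici).tendsto.mono_left (nhdsWithin_mono 0 Ioi_subset_Ici_self)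
  have hcosh : Tendsto (fun r => cosh (μ * arcosh (1 + r))) (𝓝[>] 0) (𝓝 1) := by
    have h := (continuous_cosh.tendsto (μ * 0)).comp (harcosh.const_mul μ)
    rwa [mul_zero, cosh_zero] at h
  have hsqrt : Tendsto (fun r : ℝ => √(2 + r)) (𝓝[>] 0) (𝓝 √2) :=
    (Continuous.tendsto' (by fun_prop) 0 _ (by rw [add_zero])).mono_left nhdsWithin_le_nhds
  have h := hcosh.div hsqrt (by positivity)
  rw [one_div] at h
  refine h.congr' ?_
  filter_upwards [self_mem_nhdsWithin] with r (hr : 0 < r)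
  rw [Pi.div_apply, besselKWeight, sinh_arcosh_one_add hr, sqrt_mul hr.le,
    rpow_sub_one hr.ne', ← sqrt_eq_rpow]
  have : √r * √r = r := mul_self_sqrt hr.le
  have : 0 < √r := sqrt_pos.2 hr
  field_simp
  linarith

lemma tendsto_sqrt_mul_exp_mul_besselK_atTop :
    Tendsto (fun x => √x * (exp x * besselK μ x)) atTop (𝓝 √(π / 2)) := by
  have h := tendsto_rpow_mul_laplaceTransform_atTop one_half_pos measurable_besselKWeight
    (integrableOn_exp_mul_besselKWeight one_pos)
    (tendsto_besselKWeight_div_rpow_nhdsGT_zero (μ := μ))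
  rw [Gamma_one_half_eq, inv_mul_eq_div, ← sqrt_div pi_pos.le] at h
  refine h.congr fun x => ?_
  rw [laplaceTransform_besselKWeight, sqrt_eq_rpow]

lemma tendsto_rpow_mul_besselK_nhdsGT_zero (hμ : 0 < μ) :
    Tendsto (fun x => x ^ μ * besselK μ x) (𝓝[>] 0) (𝓝 (2 ^ (μ - 1) * Gamma μ)) := by
  have h := tendsto_rpow_mul_laplaceTransform_nhdsGT_zero hμ measurable_besselKWeight
    (integrableOn_exp_mul_besselKWeight one_pos) (tendsto_besselKWeight_div_rpow_atTop hμ)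
  have hexp : Tendsto (fun x : ℝ => exp (-x)) (𝓝[>] 0) (𝓝 1) :=
    (Continuous.tendsto' (by fun_prop) 0 1 (by simp)).mono_left nhdsWithin_le_nhds
  refine (by simpa only [one_mul] using hexp.mul h : Tendsto _ _ _).congr fun x => ?_
  rw [besselK_eq_exp_mul_laplaceTransform]
  ring

lemma continuousOn_besselK : ContinuousOn (besselK μ) (Ioi 0) := by
  have hlap : ContinuousOn (laplaceTransform (besselKWeight μ)) (Ioi 0) := fun x hx =>
    (continuousAt_laplaceTransform measurable_besselKWeight
      (integrableOn_exp_mul_besselKWeight (half_pos hx)) (half_lt_self hx)).continuousWithinAt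
  exact ((by fun_prop : ContinuousOn (fun x : ℝ => exp (-x)) (Ioi 0)).mul hlap).congr
    fun x _ => besselK_eq_exp_mul_laplaceTransform

end BesselK

section BetaIntegral

variable {p q : ℝ}

lemma ofReal_rpow_mul_one_sub_rpow {u : ℝ} (hu : u ∈ uIcc (0 : ℝ) 1) :
    ((u ^ (p - 1) * (1 - u) ^ (q - 1) : ℝ) : ℂ) =
      (u : ℂ) ^ ((p : ℂ) - 1) * (1 - (u : ℂ)) ^ ((q : ℂ) - 1) := by
  rw [uIcc_of_le zero_le_one] at hu
  push_cast [Complex.ofReal_cpow hu.1, Complex.ofReal_cpow (sub_nonneg.2 hu.2)]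
  rfl

lemma intervalIntegrable_rpow_mul_one_sub_rpow (hp : 0 < p) (hq : 0 < q) :
    IntervalIntegrable (fun u : ℝ => u ^ (p - 1) * (1 - u) ^ (q - 1)) volume 0 1 := by
  have h := Complex.betaIntegral_convergent (u := p) (v := q) (by simpa) (by simpa)
  refine intervalIntegrable_iff.2 (IntegrableOn.congr_fun (intervalIntegrable_iff.1 h).re
    (fun u hu => ?_) measurableSet_uIoc)
  rw [← ofReal_rpow_mul_one_sub_rpow (uIoc_subset_uIcc hu), RCLike.re_to_complex,
    Complex.ofReal_re]

lemma integral_rpow_mul_one_sub_rpow (hp : 0 < p) (hq : 0 < q) :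
    ∫ u in (0 : ℝ)..1, u ^ (p - 1) * (1 - u) ^ (q - 1) = Gamma p * Gamma q / Gamma (p + q) := by
  have h := Complex.betaIntegral_eq_Gamma_mul_div p q (by simpa) (by simpa)
  rw [Complex.betaIntegral, ← intervalIntegral.integral_congr
    fun u hu => ofReal_rpow_mul_one_sub_rpow hu, intervalIntegral.integral_ofReal,
    ← Complex.ofReal_add] at h
  simp only [Complex.Gamma_ofReal] at h
  exact_mod_cast h

end BetaIntegral

section SymmetricBetaIntegral

variable {a : ℝ}

lemma one_sub_sq_rpow_eq {s : ℝ} (hs : s ∈ uIcc (-1 : ℝ) 1) :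
    4 ^ (a - 1) * (((s + 1) * 2⁻¹) ^ (a - 1) * (1 - (s + 1) * 2⁻¹) ^ (a - 1)) =
      (1 - s ^ 2) ^ (a - 1) := by
  rw [uIcc_of_le (by norm_num)] at hs
  rw [← mul_rpow (by linarith [hs.1]) (by linarith [hs.2]), ← mul_rpow (by norm_num)]
  · congr 1
    ring
  · exact mul_nonneg (by linarith [hs.1]) (by linarith [hs.2])

lemma intervalIntegrable_one_sub_sq_rpow (ha : 0 < a) :
    IntervalIntegrable (fun s : ℝ => (1 - s ^ 2) ^ (a - 1)) volume (-1) 1 := by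
  have h : IntervalIntegrable (fun s : ℝ => ((s + 1) * 2⁻¹) ^ (a - 1) *
      (1 - (s + 1) * 2⁻¹) ^ (a - 1)) volume (-1) 1 := by
    convert! ((intervalIntegrable_rpow_mul_one_sub_rpow ha ha).comp_mul_right
      (c := 2⁻¹)).comp_add_right 1 using 1 <;> norm_num
  exact (h.const_mul (4 ^ (a - 1))).congr fun s hs => one_sub_sq_rpow_eq (uIoc_subset_uIcc hs)

lemma integral_one_sub_sq_rpow (ha : 0 < a) :
    ∫ s in (-1 : ℝ)..1, (1 - s ^ 2) ^ (a - 1) = √π * Gamma a / Gamma (a + 1 / 2) := by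
  have hbeta : ∫ s in (-1 : ℝ)..1, ((s + 1) * 2⁻¹) ^ (a - 1) * (1 - (s + 1) * 2⁻¹) ^ (a - 1) =
      2 * (Gamma a * Gamma a / Gamma (2 * a)) := by
    rw [intervalIntegral.integral_comp_add_right
        (fun s => (s * 2⁻¹) ^ (a - 1) * (1 - s * 2⁻¹) ^ (a - 1)) 1,
      intervalIntegral.integral_comp_mul_right
        (fun u => u ^ (a - 1) * (1 - u) ^ (a - 1)) (by norm_num)]
    norm_num only
    rw [integral_rpow_mul_one_sub_rpow ha ha, smul_eq_mul, two_mul a]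
  have hpow : (4 : ℝ) ^ (a - 1) * 2 * 2 ^ (1 - 2 * a) = 1 := by
    rw [show (4 : ℝ) = 2 ^ (2 : ℝ) by norm_num, ← rpow_mul two_pos.le,
      ← rpow_add_one two_ne_zero, ← rpow_add two_pos]
    ring_nf
    exact rpow_zero 2
  have hdup := Gamma_mul_Gamma_add_half a
  rw [← intervalIntegral.integral_congr fun s hs => one_sub_sq_rpow_eq hs,
    intervalIntegral.integral_const_mul, hbeta, ← mul_assoc, mul_div_assoc', div_eq_div_iff
    (Gamma_pos_of_pos (by positivity)).ne' (Gamma_pos_of_pos (by positivity)).ne']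
  linear_combination 4 ^ (a - 1) * 2 * Gamma a * hdup + Gamma a * Gamma (2 * a) * √π * hpow

lemma hasDerivAt_pow_mul_one_sub_sq_rpow (n : ℕ) {s : ℝ} (hs : s ∈ Ioo (-1 : ℝ) 1) :
    HasDerivAt (fun s => s ^ (n + 1) * (1 - s ^ 2) ^ a)
      ((n + 1) * ((1 - s ^ 2) ^ (a - 1) * s ^ n) -
        (n + 1 + 2 * a) * ((1 - s ^ 2) ^ (a - 1) * s ^ (n + 2))) s := by
  have hpos : 0 < 1 - s ^ 2 := by nlinarith [hs.1, hs.2]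
  convert! (hasDerivAt_pow (n + 1) s).mul
    (((hasDerivAt_pow 2 s).const_sub 1).rpow_const (p := a) (Or.inl hpos.ne')) using 1
  have hpow : (1 - s ^ 2) ^ a = (1 - s ^ 2) ^ (a - 1) * (1 - s ^ 2) := by
    rw [rpow_sub_one hpos.ne', div_mul_cancel₀ _ hpos.ne']
  rw [hpow]
  push_cast
  ring

lemma intervalIntegrable_one_sub_sq_rpow_mul_pow (ha : 0 < a) (n : ℕ) :
    IntervalIntegrable (fun s : ℝ => (1 - s ^ 2) ^ (a - 1) * s ^ n) volume (-1) 1 :=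
  (intervalIntegrable_one_sub_sq_rpow ha).mul_continuousOn (by fun_prop)

lemma integral_one_sub_sq_rpow_mul_pow_add_two (ha : 0 < a) (n : ℕ) :
    (n + 1 + 2 * a) * ∫ s in (-1 : ℝ)..1, (1 - s ^ 2) ^ (a - 1) * s ^ (n + 2) =
      (n + 1) * ∫ s in (-1 : ℝ)..1, (1 - s ^ 2) ^ (a - 1) * s ^ n := by
  have hint (c : ℝ) (k : ℕ) := (intervalIntegrable_one_sub_sq_rpow_mul_pow ha k).const_mul c
  have h := intervalIntegral.integral_eq_sub_of_hasDerivAt_of_le (by norm_num)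
    (f := fun s : ℝ => s ^ (n + 1) * (1 - s ^ 2) ^ a)
    (Continuous.continuousOn (by fun_prop (disch := exact ha.le)))
    (fun s hs => hasDerivAt_pow_mul_one_sub_sq_rpow n hs) ((hint _ _).sub (hint _ _))
  norm_num [zero_rpow ha.ne', intervalIntegral.integral_sub (hint _ _) (hint _ _)] at h
  linarith

lemma integral_one_sub_sq_rpow_mul_pow_two_mul (ha : 0 < a) (k : ℕ) :
    ∫ s in (-1 : ℝ)..1, (1 - s ^ 2) ^ (a - 1) * s ^ (2 * k) =
      √π * Gamma a * (2 * k).factorial / (4 ^ k * k.factorial * Gamma (a + k + 1 / 2)) := by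
  induction k with
  | zero => simpa using integral_one_sub_sq_rpow ha
  | succ k ih =>
    have hrec := integral_one_sub_sq_rpow_mul_pow_add_two ha (2 * k)
    have hGamma : Gamma (a + (k + 1 : ℕ) + 1 / 2) = (a + k + 1 / 2) * Gamma (a + k + 1 / 2) := by
      rw [← Gamma_add_one (by positivity)]
      push_cast
      ring_nf
    have hpos : 0 < Gamma (a + k + 1 / 2) := Gamma_pos_of_pos (by positivity)
    rw [ih, mul_div_assoc', eq_div_iff (by positivity)] at hrec
    rw [hGamma, mul_add_one, Nat.factorial_succ, Nat.factorial_succ, Nat.factorial_succ,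
      eq_div_iff (by positivity)]
    push_cast at hrec ⊢
    linear_combination 2 * (k + 1 : ℝ) * hrec

lemma hasSum_integral_one_sub_sq_rpow_mul_pow (ha : 0 < a) (x : ℝ) :
    HasSum (fun k : ℕ => x ^ (2 * k) / (2 * k).factorial *
      ∫ s in (-1 : ℝ)..1, (1 - s ^ 2) ^ (a - 1) * s ^ (2 * k))
      (∫ s in (-1 : ℝ)..1, (1 - s ^ 2) ^ (a - 1) * cosh (x * s)) := by
  simp only [← intervalIntegral.integral_const_mul]
  refine intervalIntegral.hasSum_integral_of_dominated_convergence
    (fun k s => |(1 - s ^ 2) ^ (a - 1)| * (x ^ (2 * k) / (2 * k).factorial))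
    (fun k => (intervalIntegrable_iff.1 ((intervalIntegrable_one_sub_sq_rpow_mul_pow ha
      (2 * k)).const_mul _)).aestronglyMeasurable) (fun k => .of_forall fun s hs => ?_)
    (.of_forall fun s _ => (hasSum_cosh x).summable.mul_left _) ?_ (.of_forall fun s _ => ?_)
  · rw [uIoc_of_le (by norm_num)] at hs
    have hs1 : |s ^ (2 * k)| ≤ 1 := by
      rw [abs_pow]
      exact pow_le_one₀ (abs_nonneg s) (abs_le.2 ⟨hs.1.le, hs.2⟩)
    rw [norm_mul, norm_mul, norm_of_nonneg (by rw [pow_mul]; positivity), mul_comm,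
      norm_eq_abs, norm_eq_abs]
    refine mul_le_mul_of_nonneg_right ?_ (by rw [pow_mul]; positivity)
    exact mul_le_of_le_one_right (abs_nonneg _) hs1
  · simpa only [tsum_mul_left, (hasSum_cosh x).tsum_eq] using
      (intervalIntegrable_one_sub_sq_rpow ha).abs.mul_const (cosh x)
  · convert! (hasSum_cosh (x * s)).mul_left ((1 - s ^ 2) ^ (a - 1)) using 2 with k
    ring

lemma integral_one_sub_sq_rpow_mul_exp (ha : 0 < a) (x : ℝ) :
    ∫ s in (-1 : ℝ)..1, (1 - s ^ 2) ^ (a - 1) * exp (x * s) =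
      ∫ s in (-1 : ℝ)..1, (1 - s ^ 2) ^ (a - 1) * cosh (x * s) := by
  have hint (y : ℝ) : IntervalIntegrable (fun s => (1 - s ^ 2) ^ (a - 1) * exp (y * s))
      volume (-1) 1 := (intervalIntegrable_one_sub_sq_rpow ha).mul_continuousOn (by fun_prop)
  have hneg : ∫ s in (-1 : ℝ)..1, (1 - s ^ 2) ^ (a - 1) * exp (-x * s) =
      ∫ s in (-1 : ℝ)..1, (1 - s ^ 2) ^ (a - 1) * exp (x * s) := by
    have h := intervalIntegral.integral_comp_neg (a := -1) (b := 1)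
      (fun s : ℝ => (1 - s ^ 2) ^ (a - 1) * exp (x * s))
    simpa only [neg_sq, mul_neg, neg_neg, ← neg_mul] using h
  have hcosh (s : ℝ) : (1 - s ^ 2) ^ (a - 1) * cosh (x * s) =
      ((1 - s ^ 2) ^ (a - 1) * exp (x * s) + (1 - s ^ 2) ^ (a - 1) * exp (-x * s)) / 2 := by
    rw [cosh_eq, neg_mul]
    ring
  simp only [hcosh, intervalIntegral.integral_div]
  rw [intervalIntegral.integral_add (hint x) (hint (-x)), hneg, add_self_div_two]

end SymmetricBetaIntegral

/-- The function whose Laplace transform is `e^{-x} I_ν(x)` up to a factor: substitute `s = 1 - r`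
in Poisson's integral `∫_{-1}^1 (1 - s²)^{ν - 1/2} e^{xs} ds`. -/
noncomputable def besselIWeight (ν : ℝ) : ℝ → ℝ :=
  (Ioo 0 2).indicator fun r => (r * (2 - r)) ^ (ν - 1 / 2)

section BesselI

variable {ν x : ℝ}

lemma besselI_eq_integral_cosh (hν : -(1 / 2) < ν) (hx : 0 < x) :
    besselI ν x = (x / 2) ^ ν / (√π * Gamma (ν + 1 / 2)) *
      ∫ s in (-1 : ℝ)..1, (1 - s ^ 2) ^ (ν + 1 / 2 - 1) * cosh (x * s) := by
  have ha : 0 < ν + 1 / 2 := by linarith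
  rw [besselI, ← (hasSum_integral_one_sub_sq_rpow_mul_pow ha x).tsum_eq, ← tsum_mul_left]
  refine tsum_congr fun k => ?_
  have hpow : (x / 2) ^ (ν + 2 * k) = (x / 2) ^ ν * (x ^ (2 * k) / 4 ^ k) := by
    have h := rpow_add_natCast (half_pos hx).ne' ν (2 * k)
    push_cast at h
    rw [h, div_pow, pow_mul 2]
    norm_num only
  have hGamma : Gamma (ν + 1 / 2) ≠ 0 := (Gamma_pos_of_pos ha).ne'
  rw [integral_one_sub_sq_rpow_mul_pow_two_mul ha, hpow,
    show ν + 1 / 2 + k + 1 / 2 = ν + k + 1 by ring]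
  generalize Gamma (ν + 1 / 2) = G at hGamma ⊢
  field_simp

lemma exp_mul_besselIWeight_eq_indicator : (fun r => exp (-x * r) * besselIWeight ν r) =
    (Ioo 0 2).indicator fun r =>
      exp (-x) * ((1 - (1 - r) ^ 2) ^ (ν + 1 / 2 - 1) * exp (x * (1 - r))) := by
  ext r
  by_cases hr : r ∈ Ioo (0 : ℝ) 2
  · simp only [besselIWeight, indicator_of_mem hr]
    rw [mul_left_comm, ← exp_add, mul_comm]
    ring_nf
  · simp only [besselIWeight, indicator_of_notMem hr, mul_zero]

lemma measurable_besselIWeight : Measurable (besselIWeight ν) :=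
  Measurable.indicator (by fun_prop) measurableSet_Ioo

lemma integrableOn_exp_mul_besselIWeight (hν : -(1 / 2) < ν) :
    IntegrableOn (fun r => exp (-x * r) * besselIWeight ν r) (Ioi 0) := by
  have h := ((intervalIntegrable_one_sub_sq_rpow (a := ν + 1 / 2) (by linarith)).comp_sub_left
    1).symm
  norm_num only at h
  have hexp := (h.mul_continuousOn (g := fun r => exp (x * (1 - r))) (by fun_prop)).const_mul
    (exp (-x))
  rw [intervalIntegrable_iff_integrableOn_Ioo_of_le zero_le_two] at hexp
  rw [exp_mul_besselIWeight_eq_indicator]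
  exact (hexp.integrable_indicator measurableSet_Ioo).integrableOn

lemma laplaceTransform_besselIWeight : laplaceTransform (besselIWeight ν) x =
    exp (-x) * ∫ s in (-1 : ℝ)..1, (1 - s ^ 2) ^ (ν + 1 / 2 - 1) * exp (x * s) := by
  have h := intervalIntegral.integral_comp_sub_left (a := 0) (b := 2)
    (fun s => (1 - s ^ 2) ^ (ν + 1 / 2 - 1) * exp (x * s)) 1
  norm_num only at h
  rw [laplaceTransform, exp_mul_besselIWeight_eq_indicator,
    setIntegral_indicator measurableSet_Ioo, inter_eq_right.2 Ioo_subset_Ioi_self,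
    integral_const_mul, ← integral_Ioc_eq_integral_Ioo,
    ← intervalIntegral.integral_of_le zero_le_two, h]

lemma besselI_eq_exp_mul_laplaceTransform (hν : -(1 / 2) < ν) (hx : 0 < x) :
    besselI ν x = (x / 2) ^ ν / (√π * Gamma (ν + 1 / 2)) *
      (exp x * laplaceTransform (besselIWeight ν) x) := by
  rw [besselI_eq_integral_cosh hν hx, laplaceTransform_besselIWeight,
    integral_one_sub_sq_rpow_mul_exp (by linarith), ← mul_assoc (exp x), ← exp_add,
    add_neg_cancel, exp_zero, one_mul]

lemma laplaceTransform_besselIWeight_zero (hν : -(1 / 2) < ν) :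
    laplaceTransform (besselIWeight ν) 0 = √π * Gamma (ν + 1 / 2) / Gamma (ν + 1) := by
  have h := integral_one_sub_sq_rpow (a := ν + 1 / 2) (by linarith)
  rw [add_assoc, add_halves] at h
  simpa [laplaceTransform_besselIWeight] using h

lemma continuous_laplaceTransform_besselIWeight (hν : -(1 / 2) < ν) :
    Continuous (laplaceTransform (besselIWeight ν)) :=
  continuous_iff_continuousAt.2 fun x => continuousAt_laplaceTransform measurable_besselIWeight
    (integrableOn_exp_mul_besselIWeight hν) (sub_one_lt x)

lemma continuousOn_besselI (hν : -(1 / 2) < ν) : ContinuousOn (besselI ν) (Ioi 0) := by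
  have hpow : ContinuousOn (fun x : ℝ => (x / 2) ^ ν) (Ioi 0) := fun x (hx : 0 < x) =>
    ContinuousAt.continuousWithinAt (by fun_prop (disch := exact Or.inl (half_pos hx).ne'))
  have hlap := continuous_laplaceTransform_besselIWeight hν
  exact ((hpow.div_const (√π * Gamma (ν + 1 / 2))).mul
    (Continuous.continuousOn (by fun_prop))).congr fun x hx =>
      besselI_eq_exp_mul_laplaceTransform hν hx

lemma tendsto_besselI_div_rpow_nhdsGT_zero (hν : -(1 / 2) < ν) :
    Tendsto (fun x => besselI ν x / x ^ ν) (𝓝[>] 0) (𝓝 (2 ^ ν * Gamma (ν + 1))⁻¹) := by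
  have hlap := continuous_laplaceTransform_besselIWeight hν
  have hGamma : 0 < Gamma (ν + 1 / 2) := Gamma_pos_of_pos (by linarith)
  have h : Tendsto (fun x => (2 ^ ν * (√π * Gamma (ν + 1 / 2)))⁻¹ *
      (exp x * laplaceTransform (besselIWeight ν) x)) (𝓝[>] 0) (𝓝 (2 ^ ν * Gamma (ν + 1))⁻¹) := by
    refine (Continuous.tendsto' (by fun_prop) 0 _ ?_).mono_left nhdsWithin_le_nhds
    rw [laplaceTransform_besselIWeight_zero hν, exp_zero]
    generalize Gamma (ν + 1 / 2) = G at hGamma ⊢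
    field_simp
  refine h.congr' ?_
  filter_upwards [self_mem_nhdsWithin] with x (hx : 0 < x)
  have hpow : x ^ ν ≠ 0 := (rpow_pos_of_pos hx ν).ne'
  rw [besselI_eq_exp_mul_laplaceTransform hν hx, div_rpow hx.le two_pos.le]
  field_simp

lemma tendsto_besselIWeight_div_rpow_nhdsGT_zero :
    Tendsto (fun r => besselIWeight ν r / r ^ (ν + 1 / 2 - 1)) (𝓝[>] 0)
      (𝓝 (2 ^ (ν - 1 / 2))) := by
  have h : Tendsto (fun r : ℝ => (2 - r) ^ (ν - 1 / 2)) (𝓝[>] 0) (𝓝 (2 ^ (ν - 1 / 2))) :=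
    ((Continuous.tendsto' (by fun_prop) 0 2 (sub_zero 2)).rpow_const
      (Or.inl two_ne_zero)).mono_left nhdsWithin_le_nhds
  refine h.congr' ?_
  filter_upwards [Ioo_mem_nhdsGT two_pos] with r hr
  rw [besselIWeight, indicator_of_mem hr, mul_rpow hr.1.le (sub_nonneg.2 hr.2.le),
    add_sub_assoc, show (1 / 2 : ℝ) - 1 = -(1 / 2) by norm_num, ← sub_eq_add_neg,
    mul_div_cancel_left₀ _ (rpow_pos_of_pos hr.1 _).ne']

lemma tendsto_sqrt_mul_exp_neg_mul_besselI_atTop (hν : -(1 / 2) < ν) :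
    Tendsto (fun x => √x * (exp (-x) * besselI ν x)) atTop (𝓝 (√(2 * π))⁻¹) := by
  have hGamma : 0 < Gamma (ν + 1 / 2) := Gamma_pos_of_pos (by linarith)
  have hlap := tendsto_rpow_mul_laplaceTransform_atTop (by linarith) measurable_besselIWeight
    (integrableOn_exp_mul_besselIWeight (x := 0) hν) tendsto_besselIWeight_div_rpow_nhdsGT_zero
  have h := hlap.const_mul (2 ^ ν * (√π * Gamma (ν + 1 / 2)))⁻¹
  have hlim : (2 ^ ν * (√π * Gamma (ν + 1 / 2)))⁻¹ * (2 ^ (ν - 1 / 2) * Gamma (ν + 1 / 2)) =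
      (√(2 * π))⁻¹ := by
    rw [rpow_sub two_pos, ← sqrt_eq_rpow, sqrt_mul two_pos.le]
    generalize Gamma (ν + 1 / 2) = G at hGamma ⊢
    field_simp
  rw [hlim] at h
  refine h.congr' ?_
  filter_upwards [eventually_gt_atTop 0] with x hx
  rw [besselI_eq_exp_mul_laplaceTransform hν hx, rpow_add hx, ← sqrt_eq_rpow,
    div_rpow hx.le two_pos.le, exp_neg]
  field_simp

end BesselI

/-- The integral `∫_0^x e^{βt} t^ν I_ν(t) dt` to be estimated. -/
noncomputable def besselIntegral (β ν x : ℝ) : ℝ :=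
  ∫ t in (0 : ℝ)..x, exp (β * t) * t ^ ν * besselI ν t

/-- The ratio of `besselIntegral β ν x` to `e^{βx} x^{ν-1} / K_{ν+2}(x)`, whose supremum over
`x > 0` is the best constant in the corresponding upper bound. -/
noncomputable def besselRatio (β ν x : ℝ) : ℝ :=
  exp (-β * x) * besselK (ν + 2) x / x ^ (ν - 1) * besselIntegral β ν x

section BesselRatio

variable {β ν x : ℝ}

lemma continuousOn_exp_mul_rpow_mul_besselI (hν : -(1 / 2) < ν) :
    ContinuousOn (fun t => exp (β * t) * t ^ ν * besselI ν t) (Ioi 0) := by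
  have hpow : ContinuousOn (fun t : ℝ => t ^ ν) (Ioi 0) :=
    continuousOn_id.rpow_const fun t ht => Or.inl (ne_of_gt ht)
  exact ((Continuous.continuousOn (by fun_prop)).mul hpow).mul (continuousOn_besselI hν)

lemma intervalIntegrable_exp_mul_rpow_mul_besselI (hν : -(1 / 2) < ν) (hx : 0 < x) :
    IntervalIntegrable (fun t => exp (β * t) * t ^ ν * besselI ν t) volume 0 x := by
  have hlap := continuous_laplaceTransform_besselIWeight hν
  have hcont : Continuous fun t => (2 ^ ν * (√π * Gamma (ν + 1 / 2)))⁻¹ *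
      (exp (β * t) * (exp t * laplaceTransform (besselIWeight ν) t)) := by fun_prop
  refine ((intervalIntegral.intervalIntegrable_rpow' (r := 2 * ν) (by linarith)).mul_continuousOn
    hcont.continuousOn).congr fun t ht => ?_
  have ht0 : 0 < t := (uIoc_of_le hx.le ▸ ht).1
  rw [besselI_eq_exp_mul_laplaceTransform hν ht0, div_rpow ht0.le two_pos.le, two_mul,
    rpow_add ht0]
  field_simp

lemma tendsto_besselIntegral_div_rpow_nhdsGT_zero (hν : -(1 / 2) < ν) :
    Tendsto (fun x => besselIntegral β ν x / x ^ (2 * ν + 1)) (𝓝[>] 0)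
      (𝓝 ((2 ^ ν * Gamma (ν + 1))⁻¹ / (2 * ν + 1))) := by
  refine tendsto_integral_div_rpow_nhdsGT_zero (continuousOn_exp_mul_rpow_mul_besselI hν)
    (fun x hx => intervalIntegrable_exp_mul_rpow_mul_besselI hν hx) (by linarith) ?_
  have hexp : Tendsto (fun t : ℝ => exp (β * t)) (𝓝[>] 0) (𝓝 1) :=
    (Continuous.tendsto' (by fun_prop) 0 1 (by simp)).mono_left nhdsWithin_le_nhds
  have h := hexp.mul (tendsto_besselI_div_rpow_nhdsGT_zero hν)
  rw [one_mul] at h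
  refine h.congr' ?_
  filter_upwards [self_mem_nhdsWithin] with t (ht : 0 < t)
  rw [add_sub_cancel_right, two_mul, rpow_add ht]
  field_simp

lemma tendsto_besselIntegral_div_exp_mul_rpow_atTop (hβ : -1 < β) (hν : -(1 / 2) < ν) :
    Tendsto (fun x => besselIntegral β ν x / (exp ((1 + β) * x) * x ^ (ν - 1 / 2))) atTop
      (𝓝 ((√(2 * π))⁻¹ / (1 + β))) := by
  refine tendsto_integral_div_exp_mul_rpow_atTop (continuousOn_exp_mul_rpow_mul_besselI hν)
    (fun x hx => intervalIntegrable_exp_mul_rpow_mul_besselI hν hx) (by linarith) ?_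
  refine (tendsto_sqrt_mul_exp_neg_mul_besselI_atTop hν).congr' ?_
  filter_upwards [eventually_gt_atTop 0] with t ht
  rw [one_add_mul, exp_add, rpow_sub ht, ← sqrt_eq_rpow, exp_neg]
  field_simp

lemma tendsto_besselRatio_nhdsGT_zero (hν : -(1 / 2) < ν) :
    Tendsto (besselRatio β ν) (𝓝[>] 0) (𝓝 (2 * (ν + 1) / (2 * ν + 1))) := by
  have hexp : Tendsto (fun x : ℝ => exp (-β * x)) (𝓝[>] 0) (𝓝 1) :=
    (Continuous.tendsto' (by fun_prop) 0 1 (by simp)).mono_left nhdsWithin_le_nhds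
  have h := (hexp.mul (tendsto_rpow_mul_besselK_nhdsGT_zero (μ := ν + 2) (by linarith))).mul
    (tendsto_besselIntegral_div_rpow_nhdsGT_zero (β := β) hν)
  have hlim : 1 * (2 ^ (ν + 2 - 1) * Gamma (ν + 2)) * ((2 ^ ν * Gamma (ν + 1))⁻¹ / (2 * ν + 1)) =
      2 * (ν + 1) / (2 * ν + 1) := by
    have hGamma : 0 < Gamma (ν + 1) := Gamma_pos_of_pos (by linarith)
    rw [show ν + 2 = ν + 1 + 1 by ring, Gamma_add_one (by linarith), add_sub_cancel_right,
      rpow_add_one two_ne_zero]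
    field_simp
  rw [hlim] at h
  refine h.congr' ?_
  filter_upwards [self_mem_nhdsWithin] with x (hx : 0 < x)
  have hpow : x ^ (2 * ν + 1) = x ^ (ν + 2) * x ^ (ν - 1) := by
    rw [← rpow_add hx]
    ring_nf
  rw [besselRatio, hpow]
  field_simp

lemma tendsto_besselRatio_atTop (hβ : -1 < β) (hν : -(1 / 2) < ν) :
    Tendsto (besselRatio β ν) atTop (𝓝 (1 / (2 * (1 + β)))) := by
  have h := (tendsto_sqrt_mul_exp_mul_besselK_atTop (μ := ν + 2)).mul
    (tendsto_besselIntegral_div_exp_mul_rpow_atTop hβ hν)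
  have hlim : √(π / 2) * ((√(2 * π))⁻¹ / (1 + β)) = 1 / (2 * (1 + β)) := by
    rw [sqrt_div pi_pos.le, sqrt_mul two_pos.le]
    field_simp
    rw [sq_sqrt two_pos.le]
  rw [hlim] at h
  refine h.congr' ?_
  filter_upwards [eventually_gt_atTop 0] with x hx
  have hpow : x ^ (ν - 1 / 2) = √x * x ^ (ν - 1) := by
    rw [sqrt_eq_rpow, ← rpow_add hx]
    ring_nf
  rw [besselRatio, hpow, one_add_mul, exp_add, neg_mul, exp_neg]
  field_simp

lemma continuousOn_besselRatio (hν : -(1 / 2) < ν) :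
    ContinuousOn (besselRatio β ν) (Ioi 0) := by
  have hint : ContinuousOn (besselIntegral β ν) (Ioi 0) := fun x hx =>
    (hasDerivAt_integral_of_continuousOn_Ioi (continuousOn_exp_mul_rpow_mul_besselI hν)
      (fun y hy => intervalIntegrable_exp_mul_rpow_mul_besselI hν hy)
      hx).continuousAt.continuousWithinAt
  have hpow : ContinuousOn (fun x : ℝ => x ^ (ν - 1)) (Ioi 0) :=
    continuousOn_id.rpow_const fun x hx => Or.inl (ne_of_gt hx)
  have hexp : ContinuousOn (fun x => exp (-β * x)) (Ioi 0) := by fun_prop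
  exact ((hexp.mul continuousOn_besselK).div hpow
    fun x hx => (rpow_pos_of_pos hx _).ne').mul hint

end BesselRatio

theorem stmt_12_general (β ν : ℝ) (hβ : -1 < β) (hν : -(1 / 2) < ν) :
    sSup ((fun x : ℝ => (Real.exp (-β * x) * besselK (ν + 2) x / x ^ (ν - 1)) *
        ∫ t in (0 : ℝ)..x, Real.exp (β * t) * t ^ ν * besselI ν t) '' Set.Ioi 0) ≥
      max (1 / (2 * (1 + β))) (2 * (ν + 1) / (2 * ν + 1)) := by
  change max _ _ ≤ sSup (besselRatio β ν '' Ioi 0)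
  have hzero := tendsto_besselRatio_nhdsGT_zero (β := β) hν
  have htop := tendsto_besselRatio_atTop hβ hν
  have hle (x : ℝ) (hx : 0 < x) : besselRatio β ν x ≤ sSup (besselRatio β ν '' Ioi 0) :=
    le_csSup (bddAbove_image_Ioi_of_tendsto (continuousOn_besselRatio hν) hzero htop)
      (mem_image_of_mem _ hx)
  exact max_le (le_of_tendsto htop ((eventually_gt_atTop 0).mono hle))
    (le_of_tendsto hzero (eventually_mem_nhdsWithin.mono hle))

theorem stmt_12 (β ν : ℝ) (hβ0 : -1 < β) (hβ1 : β < 0) (hν : -(1/2) < ν) :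
    sSup ((fun x : ℝ => (Real.exp (-β * x) * besselK (ν + 2) x / x ^ (ν - 1)) *
        ∫ t in (0 : ℝ)..x, Real.exp (β * t) * t ^ ν * besselI ν t) '' Set.Ioi 0) ≥
      max (1 / (2 * (1 + β))) (2 * (ν + 1) / (2 * ν + 1)) :=
  stmt_12_general β ν hβ0 hν
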